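/- For all natural numbers n ≥ 1 and k ≥ 0, the lcm-binomial number [n+k, n] = lcm(k+1, k+2, …, k+n) / lcm(1, 2, …, n) divides the positive integer lcm(1, 2, …, n+k) / lcm(1, 2, …, n). -/

import Mathlib

/-!
Among any `i` consecutive integers one is a multiple of `i`. Hence every `i ≤ n` divides an element
of the window `k+1, …, n+k`, so `lcm(1, …, n)` divides the lcm of that window, which in turn divides
`lcm(1, …, n+k)`. Now divide by `lcm(1, …, n)`.
-/

/-- `rangeLcm a b` is `lcm(a, a+1, …, b)`. -/
def rangeLcm (a b : ℕ) : ℕ := (Finset.Icc a b).lcm id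

/-- The lcm-binomial number `[n, k] = lcm(n, n-1, …, n-k+1) / lcm(1, 2, …, k)`. -/
def lcmBinom (n k : ℕ) : ℕ := rangeLcm (n - k + 1) n / rangeLcm 1 k

theorem exists_dvd_mem_Ico {i : ℕ} (hi : 0 < i) (a : ℕ) : ∃ m ∈ Finset.Ico a (a + i), i ∣ m := by
  refine ⟨i * (a ⌈/⌉ i), Finset.mem_Ico.mpr ⟨le_smul_ceilDiv hi, ?_⟩, dvd_mul_right ..⟩
  have h : i * ((a + i - 1) / i) ≤ a + i - 1 := Nat.mul_div_le ..
  rw [Nat.ceilDiv_eq_add_pred_div]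
  omega

theorem dvd_rangeLcm {a b i : ℕ} (hai : a ≤ i) (hib : i ≤ b) : i ∣ rangeLcm a b :=
  Finset.dvd_lcm (f := id) (Finset.mem_Icc.mpr ⟨hai, hib⟩)

theorem rangeLcm_dvd {a b m : ℕ} (h : ∀ i, a ≤ i → i ≤ b → i ∣ m) : rangeLcm a b ∣ m :=
  Finset.lcm_dvd fun i hi => h i (Finset.mem_Icc.mp hi).1 (Finset.mem_Icc.mp hi).2

theorem rangeLcm_dvd_rangeLcm {a b c d : ℕ} (hca : c ≤ a) (hbd : b ≤ d) :
    rangeLcm a b ∣ rangeLcm c d :=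
  Finset.lcm_mono (Finset.Icc_subset_Icc hca hbd)

theorem rangeLcm_one_dvd_rangeLcm {n a b : ℕ} (h : a + n ≤ b + 1) :
    rangeLcm 1 n ∣ rangeLcm a b := by
  refine rangeLcm_dvd fun i hi_pos hi_le => ?_
  obtain ⟨m, hm, hdvd⟩ := exists_dvd_mem_Ico hi_pos a
  obtain ⟨ham, hm_lt⟩ := Finset.mem_Ico.mp hm
  exact hdvd.trans (dvd_rangeLcm ham (by omega))

/-- For `n ≥ 1` and `k ≥ 0`, `[n+k, n]` divides `lcm(1, …, n+k) / lcm(1, …, n)`. -/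
theorem lcmBinom_diag_dvd (n k : ℕ) (hn : 1 ≤ n) :
    lcmBinom (n + k) n ∣ rangeLcm 1 (n + k) / rangeLcm 1 n := by
  have h_window : rangeLcm 1 n ∣ rangeLcm (k + 1) (n + k) := rangeLcm_one_dvd_rangeLcm (by omega)
  have h_initial : rangeLcm (k + 1) (n + k) ∣ rangeLcm 1 (n + k) :=
    rangeLcm_dvd_rangeLcm (Nat.le_add_left 1 k) le_rfl
  rw [lcmBinom, Nat.add_sub_cancel_left]
  exact Nat.div_dvd_div h_window h_initial
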